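/- For every k ≥ 1, the group GC_{2^k}(𝔽₂) of invertible 2^k × 2^k Christoffel matrices over 𝔽₂ is isomorphic to ℤ/2ℤ × ℤ/2^{k−1}ℤ; in particular for k ≥ 3 it is generated by the element C_3(1,0) of order 2^{k−1} together with the order-2 element C_{2^k−1}(1,0) not in the subgroup generated by C_3(1,0). -/

import Mathlib

/-- The `n × n` Christoffel matrix `C_m(a,b)`. -/
def christoffel (n m : ℕ) {R : Type*} (a b : R) : Matrix (Fin n) (Fin n) R :=
  Matrix.of fun i j =>
    if (((i : ℕ) : ZMod n) - (m : ZMod n) * ((j : ℕ) : ZMod n)).val < m then a else b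

/-- A matrix is a Christoffel matrix if it equals `C_m(a,b)` for some `m` coprime to `n`
and distinct `a, b`. -/
def IsChristoffel {R : Type*} (n : ℕ) (M : Matrix (Fin n) (Fin n) R) : Prop :=
  ∃ (m : ℕ) (a b : R), 1 ≤ m ∧ m < n ∧ Nat.Coprime m n ∧ a ≠ b ∧ M = christoffel n m a b

/-!
Let `D m` be the matrix of `f(x) ↦ (1 + x + ⋯ + x ^ (m - 1)) f(x ^ m)` on `R[x] / (x ^ n - 1)`, so
that `D m * D l = D (m * l)`. In each column `m % n` entries of `D m` are `⌊m / n⌋ + 1` and the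
others `⌊m / n⌋`. Over `𝔽₂` this makes `D m` depend exactly on `m` modulo `2 * n`, and for `m < n`
the Christoffel matrices with parameters `m` are `C_m(1, 0) = D m` and `C_m(0, 1) = D (n + m)`.
Hence for `n = 2 ^ k` the Christoffel group is `(ℤ / 2 ^ (k + 1))ˣ`, with `C_m(1, 0)` corresponding
to `m`. The quadratic characters modulo `4` and `8` show that `-1` is not a power of `5`, and
`2 ^ k - 1` not a power of `3`; the orders of `5` and `3` then give the decompositions.
-/

lemma sum_range_sum_range_mul_add {A : Type*} [AddCommMonoid A] (m l : ℕ) (f : ℕ → A) :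
    ∑ s ∈ Finset.range l, ∑ t ∈ Finset.range m, f (m * s + t) =
      ∑ u ∈ Finset.range (m * l), f u := by
  induction l with
  | zero => simp
  | succ l ih => rw [Finset.sum_range_succ, ih, Nat.mul_succ, Finset.sum_range_add]

section ExtendedChristoffel

variable (R : Type*) [Semiring R] (n : ℕ)

/-- The standard basis of `R ^ n`, indexed by natural numbers read modulo `n`: the images of the
powers `x ^ u` in `R[x] / (x ^ n - 1)`. -/
def cyclicBasisVec (u : ℕ) : Fin n → R :=
  fun i => if (u : ZMod n) = ((i : ℕ) : ZMod n) then 1 else 0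

/-- The Christoffel matrix with parameters `1, 0`, extended to an arbitrary number `m` of ones per
column, wrapped cyclically and added up: the matrix of `f(x) ↦ (1 + x + ⋯ + x ^ (m - 1)) f(x ^ m)`
on `R[x] / (x ^ n - 1)`. -/
def extendedChristoffel (m : ℕ) : Matrix (Fin n) (Fin n) R :=
  Matrix.of fun i j => ∑ t ∈ Finset.range m, cyclicBasisVec R n (m * j + t) i

lemma cyclicBasisVec_eq_single (j : Fin n) : cyclicBasisVec R n j = Pi.single j 1 := by
  ext i
  simp only [cyclicBasisVec, Pi.single_apply, ZMod.natCast_eq_natCast_iff', Nat.mod_eq_of_lt i.2,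
    Nat.mod_eq_of_lt j.2, Fin.ext_iff, eq_comm]

variable [NeZero n]

lemma extendedChristoffel_mulVec_cyclicBasisVec (m u : ℕ) :
    (extendedChristoffel R n m).mulVec (cyclicBasisVec R n u) =
      ∑ t ∈ Finset.range m, cyclicBasisVec R n (m * u + t) := by
  have h_mod : cyclicBasisVec R n u = cyclicBasisVec R n (Fin.ofNat n u) := by
    funext i
    simp [cyclicBasisVec]
  rw [h_mod, cyclicBasisVec_eq_single, Matrix.mulVec_single_one]
  ext i
  simp [extendedChristoffel, cyclicBasisVec]

lemma extendedChristoffel_one : extendedChristoffel R n 1 = 1 :=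
  Matrix.ext_of_mulVec_single fun j => by
    simp [← cyclicBasisVec_eq_single, extendedChristoffel_mulVec_cyclicBasisVec]

lemma extendedChristoffel_mul (m l : ℕ) :
    extendedChristoffel R n (m * l) = extendedChristoffel R n m * extendedChristoffel R n l :=
  Matrix.ext_of_mulVec_single fun j => by
    rw [← cyclicBasisVec_eq_single, ← Matrix.mulVec_mulVec]
    simp only [extendedChristoffel_mulVec_cyclicBasisVec, Matrix.mulVec_sum, mul_add, add_assoc,
      ← mul_assoc]
    exact (sum_range_sum_range_mul_add m l fun u => cyclicBasisVec R n (m * l * j + u)).symm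

-- Among the `m` consecutive integers of a column each residue class mod `n` occurs `m / n` or
-- `m / n + 1` times.
lemma extendedChristoffel_eq_christoffel (m : ℕ) :
    extendedChristoffel R n m = christoffel n (m % n) ((m / n : ℕ) + 1 : R) (m / n : ℕ) := by
  ext i j
  set v : ZMod n := ((i : ℕ) : ZMod n) - m * ((j : ℕ) : ZMod n) with hv
  have h_entry (t : ℕ) : ((m * j + t : ℕ) : ZMod n) = ((i : ℕ) : ZMod n) ↔ t ≡ v.val [MOD n] := by
    rw [← ZMod.natCast_eq_natCast_iff, ZMod.natCast_zmod_val, hv, eq_sub_iff_add_eq']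
    push_cast
    rfl
  simp only [extendedChristoffel, cyclicBasisVec, christoffel, Matrix.of_apply, h_entry,
    Finset.sum_boole, ← Nat.count_eq_card_filter_range, Nat.count_modEq_card m (NeZero.pos n),
    Nat.mod_eq_of_lt v.val_lt, ZMod.natCast_mod, ← hv]
  split_ifs <;> simp

lemma extendedChristoffel_of_lt {m : ℕ} (hm : m < n) :
    extendedChristoffel R n m = christoffel n m (1 : R) 0 := by
  rw [extendedChristoffel_eq_christoffel, Nat.mod_eq_of_lt hm, Nat.div_eq_of_lt hm]
  simp

end ExtendedChristoffel

lemma eq_and_eq_of_christoffel_eq {R : Type*} {n m m' : ℕ} {a b a' b' : R} (hm : m < n)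
    (hm' : m' < n) (hab : a ≠ b) (hab' : a' ≠ b')
    (h : christoffel n m a b = christoffel n m' a' b') : m = m' ∧ b = b' := by
  have : NeZero n := ⟨by lia⟩
  have h_col (i : ℕ) (hi : i < n) : (if i < m then a else b) = if i < m' then a' else b' := by
    simpa [christoffel, ZMod.val_natCast_of_lt hi] using
      congrFun (congrFun h ⟨i, hi⟩) ⟨0, NeZero.pos n⟩
  have hb : b = b' := by
    have h_last := h_col (n - 1) (by lia)
    rwa [if_neg (by lia), if_neg (by lia)] at h_last
  refine ⟨?_, hb⟩
  rcases lt_trichotomy m m' with hlt | heq | hgt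
  · have h_entry := h_col m hm
    rw [if_neg (lt_irrefl m), if_pos hlt, hb] at h_entry
    exact absurd h_entry.symm hab'
  · exact heq
  · have h_entry := h_col m' hm'
    rw [if_neg (lt_irrefl m'), if_pos hgt, ← hb] at h_entry
    exact absurd h_entry hab

section ChristoffelHom

variable (R : Type*) [Ring R] (n : ℕ) [NeZero n] {p N : ℕ} [CharP R p]

lemma extendedChristoffel_eq_of_modEq {m m' : ℕ} (h : m ≡ m' [MOD n * p]) :
    extendedChristoffel R n m = extendedChristoffel R n m' := by
  have h_mod : m % n = m' % n := h.of_mul_right p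
  have h_div : m / n % p = m' / n % p := by
    rw [← Nat.mod_mul_right_div_self, h, Nat.mod_mul_right_div_self]
  rw [extendedChristoffel_eq_christoffel, extendedChristoffel_eq_christoffel, h_mod,
    CharP.natCast_eq_natCast' R p h_div]

lemma extendedChristoffel_eq_iff_modEq [Nontrivial R] {m m' : ℕ} :
    extendedChristoffel R n m = extendedChristoffel R n m' ↔ m ≡ m' [MOD n * p] := by
  refine ⟨fun h => ?_, extendedChristoffel_eq_of_modEq R n⟩
  rw [extendedChristoffel_eq_christoffel, extendedChristoffel_eq_christoffel] at h
  obtain ⟨h_mod, h_div⟩ := eq_and_eq_of_christoffel_eq (Nat.mod_lt _ (NeZero.pos n))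
    (Nat.mod_lt _ (NeZero.pos n)) (by simp) (by simp) h
  rw [CharP.natCast_eq_natCast R p] at h_div
  rw [Nat.ModEq, Nat.mod_mul, Nat.mod_mul, h_mod, h_div]

/-- The multiplicative map `m ↦ extendedChristoffel R n m` on residues modulo `n * p`, where `p` is
the characteristic of `R`. The modulus is a separate variable `N`, so that `2 ^ k * 2` can be
presented as `2 ^ (k + 1)`. -/
def christoffelHom (h : n * p = N) : ZMod N →* Matrix (Fin n) (Fin n) R where
  toFun x := extendedChristoffel R n x.val
  map_one' := by
    subst h
    rw [ZMod.val_one_eq_one_mod, extendedChristoffel_eq_of_modEq R n (Nat.mod_modEq 1 (n * p)),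
      extendedChristoffel_one]
  map_mul' x y := by
    subst h
    rw [ZMod.val_mul, extendedChristoffel_eq_of_modEq R n (Nat.mod_modEq _ (n * p)),
      extendedChristoffel_mul]

variable {R n}

lemma christoffelHom_natCast (h : n * p = N) (m : ℕ) :
    christoffelHom R n h m = extendedChristoffel R n m := by
  subst h
  change extendedChristoffel R n (m : ZMod (n * p)).val = _
  rw [ZMod.val_natCast, extendedChristoffel_eq_of_modEq R n (Nat.mod_modEq m (n * p))]

lemma christoffelHom_natCast_of_lt (h : n * p = N) {m : ℕ} (hm : m < n) :
    christoffelHom R n h m = christoffel n m (1 : R) 0 := by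
  rw [christoffelHom_natCast, extendedChristoffel_of_lt R n hm]

lemma christoffelHom_injective [Nontrivial R] [NeZero N] (h : n * p = N) :
    Function.Injective (christoffelHom R n h) := by
  intro x y hxy
  rw [← ZMod.natCast_zmod_val x, ← ZMod.natCast_zmod_val y, christoffelHom_natCast,
    christoffelHom_natCast, extendedChristoffel_eq_iff_modEq R n, h] at hxy
  simpa using (ZMod.natCast_eq_natCast_iff _ _ N).mpr hxy

end ChristoffelHom

section ZModTwo

variable {n N : ℕ} [NeZero n] {B : Matrix (Fin n) (Fin n) (ZMod 2)}

lemma isChristoffel_iff_exists_extendedChristoffel (hn : n ≠ 1) :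
    IsChristoffel n B ↔ ∃ m : ℕ, m.Coprime n ∧ extendedChristoffel (ZMod 2) n m = B := by
  constructor
  · rintro ⟨m, a, b, -, hmn, hco, hab, rfl⟩
    have ha : a = b + 1 := by revert a b; decide
    refine ⟨n * b.val + m, by simpa using hco, ?_⟩
    rw [extendedChristoffel_eq_christoffel, Nat.mul_add_mod, Nat.mod_eq_of_lt hmn,
      Nat.mul_add_div (NeZero.pos n), Nat.div_eq_of_lt hmn, add_zero, ZMod.natCast_zmod_val, ha]
  · rintro ⟨m, hco, rfl⟩
    have hco' : (m % n).Coprime n := by simpa [Nat.coprime_iff_gcd_eq_one] using hco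
    refine ⟨m % n, _, _, ?_, Nat.mod_lt m (NeZero.pos n), hco', by simp,
      extendedChristoffel_eq_christoffel (ZMod 2) n m⟩
    rw [Nat.one_le_iff_ne_zero]
    intro h0
    exact hn (by simpa [h0] using hco')

lemma isChristoffel_iff_exists_units (hn : Even n) (h : n * 2 = N) :
    IsChristoffel n B ↔ ∃ u : (ZMod N)ˣ, christoffelHom (ZMod 2) n h u = B := by
  have h_coprime (m : ℕ) : m.Coprime N ↔ m.Coprime n := by
    rw [← h, Nat.coprime_mul_iff_right]
    exact and_iff_left_of_imp fun hm => hm.coprime_dvd_right hn.two_dvd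
  rw [isChristoffel_iff_exists_extendedChristoffel (by rintro rfl; simp at hn)]
  constructor
  · rintro ⟨m, hm, rfl⟩
    exact ⟨ZMod.unitOfCoprime m ((h_coprime m).mpr hm), by
      rw [ZMod.coe_unitOfCoprime, christoffelHom_natCast]⟩
  · rintro ⟨u, rfl⟩
    exact ⟨_, (h_coprime _).mp (ZMod.val_coe_unit_coprime u), rfl⟩

end ZModTwo

section ZPowersComplement

open Subgroup

lemma disjoint_zpowers_of_orderOf_map_eq {G H : Type*} [Group G] [Group H] {x y : G} (f : G →* H)
    (hx : f x = 1) (hy : orderOf (f y) = orderOf y) : Disjoint (zpowers x) (zpowers y) := by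
  rw [disjoint_def]
  rintro _ ⟨i, rfl⟩ ⟨j, h : y ^ j = x ^ i⟩
  change x ^ i = 1
  have hf : f y ^ j = 1 := by rw [← map_zpow, h, map_zpow, hx, one_zpow]
  rw [← h, ← orderOf_dvd_iff_zpow_eq_one, ← hy]
  exact orderOf_dvd_iff_zpow_eq_one.mpr hf

lemma orderOf_and_isComplement'_zpowers_of_map_eq_neg_one {G : Type*} [Group G] [Finite G]
    {x y : G} (f : G →* ℤˣ) (hx : f x = 1) (hy : f y = -1) (hy_sq : y ^ 2 = 1)
    (h_card : orderOf x * 2 = Nat.card G) :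
    orderOf y = 2 ∧ IsComplement' (zpowers x) (zpowers y) := by
  have hy_order : orderOf y = 2 := orderOf_eq_prime hy_sq fun h => by
    rw [h, map_one] at hy
    exact absurd hy (by decide)
  refine ⟨hy_order, isComplement'_of_card_mul_and_disjoint ?_
    (disjoint_zpowers_of_orderOf_map_eq f hx ?_)⟩
  · rw [Nat.card_zpowers, Nat.card_zpowers, hy_order, h_card]
  · rw [hy, hy_order]
    exact orderOf_eq_prime (by decide) (by decide)

lemma exists_pow_mul_pow_eq_of_isComplement'_zpowers {G : Type*} [Group G] [Finite G] {x y : G}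
    (h : IsComplement' (zpowers x) (zpowers y)) (g : G) : ∃ i j : ℕ, x ^ i * y ^ j = g := by
  obtain ⟨⟨⟨a, ha⟩, ⟨b, hb⟩⟩, rfl⟩ := h.2 g
  obtain ⟨i, rfl⟩ := mem_powers_iff_mem_zpowers.mpr ha
  obtain ⟨j, rfl⟩ := mem_powers_iff_mem_zpowers.mpr hb
  exact ⟨i, j, rfl⟩

lemma nonempty_mulEquiv_of_isComplement'_zpowers {G : Type*} [CommGroup G] {x y : G}
    (h : IsComplement' (zpowers x) (zpowers y)) :
    Nonempty (G ≃* Multiplicative (ZMod (orderOf x) × ZMod (orderOf y))) := by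
  have e (z : G) : zpowers z ≃* Multiplicative (ZMod (orderOf z)) :=
    mulEquivOfCyclicCardEq (by rw [Nat.card_zpowers]; exact (Nat.card_zmod _).symm)
  have e_prod : zpowers x × zpowers y ≃* G :=
    MulEquiv.ofBijective ((zpowers x).subtype.coprod (zpowers y).subtype) h
  exact ⟨e_prod.symm.trans (((e x).prodCongr (e y)).trans (MulEquiv.prodMultiplicative _ _).symm)⟩

end ZPowersComplement

section UnitsTwoPow

open Subgroup

lemma card_units_zmod_two_pow (k : ℕ) : Nat.card (ZMod (2 ^ (k + 1)))ˣ = 2 ^ k := by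
  rw [Nat.card_eq_fintype_card, ZMod.card_units_eq_totient,
    Nat.totient_prime_pow_succ Nat.prime_two]
  exact mul_one _

lemma orderOf_three_zmod_two_pow (k : ℕ) : orderOf (3 : ZMod (2 ^ (k + 3))) = 2 ^ (k + 1) := by
  have h_nine : orderOf ((3 : ZMod (2 ^ (k + 3))) ^ 2) = 2 ^ k := by
    convert! ZMod.orderOf_one_add_mul_prime_pow Nat.prime_two 3 (by simp) (by simp) 1 (by simp) k
      using 2
    norm_num
  have h_even : 2 ∣ orderOf (3 : ZMod (2 ^ (k + 3))) := by
    have h_dvd : 4 ∣ 2 ^ (k + 3) := pow_dvd_pow 2 (by lia : 2 ≤ k + 3)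
    have h_four : orderOf (ZMod.castHom h_dvd (ZMod 4) 3) = 2 := by
      rw [map_ofNat]
      exact orderOf_eq_prime (by decide) (by decide)
    exact h_four.symm.dvd.trans (orderOf_map_dvd (ZMod.castHom h_dvd (ZMod 4)).toMonoidHom 3)
  rw [orderOf_pow_of_dvd two_ne_zero h_even] at h_nine
  rw [← Nat.div_mul_cancel h_even, h_nine, pow_succ]

lemma two_pow_sub_one_sq (k : ℕ) : (2 ^ (k + 1) - 1 : ZMod (2 ^ (k + 2))) ^ 2 = 1 := by
  have h_zero : (2 : ZMod (2 ^ (k + 2))) ^ (k + 2) = 0 := by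
    exact_mod_cast ZMod.natCast_self (2 ^ (k + 2))
  linear_combination (2 ^ k - 1) * h_zero

lemma orderOf_neg_one_and_isComplement'_zpowers_five {k : ℕ} {x : (ZMod (2 ^ (k + 2)))ˣ}
    (hx : (x : ZMod (2 ^ (k + 2))) = 5) :
    orderOf (-1 : (ZMod (2 ^ (k + 2)))ˣ) = 2 ∧ IsComplement' (zpowers x) (zpowers (-1)) := by
  have h_dvd : 4 ∣ 2 ^ (k + 2) := pow_dvd_pow 2 (by lia : 2 ≤ k + 2)
  refine orderOf_and_isComplement'_zpowers_of_map_eq_neg_one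
    (ZMod.χ₄.toUnitHom.comp (ZMod.unitsMap h_dvd)) ?_ ?_ (by simp) ?_
  · ext
    change ZMod.χ₄ (ZMod.castHom h_dvd (ZMod 4) x) = 1
    rw [hx, map_ofNat]
    rfl
  · ext
    change ZMod.χ₄ (ZMod.castHom h_dvd (ZMod 4) (-1)) = -1
    rw [map_neg, map_one]
    rfl
  · rw [← orderOf_units, hx, ZMod.orderOf_five, card_units_zmod_two_pow, pow_succ]

lemma orderOf_and_isComplement'_zpowers_three {k : ℕ} {x y : (ZMod (2 ^ (k + 4)))ˣ}
    (hx : (x : ZMod (2 ^ (k + 4))) = 3) (hy : (y : ZMod (2 ^ (k + 4))) = 2 ^ (k + 3) - 1) :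
    orderOf y = 2 ∧ IsComplement' (zpowers x) (zpowers y) := by
  have h_dvd : 8 ∣ 2 ^ (k + 4) := pow_dvd_pow 2 (by lia : 3 ≤ k + 4)
  have h_zero : (2 : ZMod 8) ^ (k + 3) = 0 := by rw [pow_add]; exact mul_zero _
  refine orderOf_and_isComplement'_zpowers_of_map_eq_neg_one
    (ZMod.χ₈'.toUnitHom.comp (ZMod.unitsMap h_dvd)) ?_ ?_ ?_ ?_
  · ext
    change ZMod.χ₈' (ZMod.castHom h_dvd (ZMod 8) x) = 1
    rw [hx, map_ofNat]
    rfl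
  · ext
    change ZMod.χ₈' (ZMod.castHom h_dvd (ZMod 8) y) = -1
    rw [hy, map_sub, map_pow, map_one, map_ofNat, h_zero]
    rfl
  · ext
    simpa [hy] using two_pow_sub_one_sq (k + 2)
  · rw [← orderOf_units, hx, orderOf_three_zmod_two_pow, card_units_zmod_two_pow,
      pow_succ 2 (k + 2)]

lemma nonempty_units_zmod_two_pow_mulEquiv (k : ℕ) :
    Nonempty ((ZMod (2 ^ (k + 2)))ˣ ≃* Multiplicative (ZMod 2 × ZMod (2 ^ k))) := by
  have h_coprime : Nat.Coprime 5 (2 ^ (k + 2)) := Nat.Coprime.pow_right _ (by decide)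
  have hx : (ZMod.unitOfCoprime 5 h_coprime : ZMod (2 ^ (k + 2))) = 5 := rfl
  obtain ⟨h_order, h_compl⟩ := orderOf_neg_one_and_isComplement'_zpowers_five hx
  have h_iso := nonempty_mulEquiv_of_isComplement'_zpowers h_compl.symm
  rwa [h_order, ← orderOf_units, hx, ZMod.orderOf_five] at h_iso

end UnitsTwoPow

lemma exists_subgroup_isChristoffel {n N : ℕ} [NeZero n] (hn : Even n) (h : n * 2 = N) :
    ∃ G : Subgroup (GL (Fin n) (ZMod 2)),
      (∀ A : GL (Fin n) (ZMod 2),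
        A ∈ G ↔ IsChristoffel n (A : Matrix (Fin n) (Fin n) (ZMod 2))) ∧
      Nonempty (G ≃* (ZMod N)ˣ) := by
  have : NeZero N := h ▸ inferInstance
  let φ : (ZMod N)ˣ →* GL (Fin n) (ZMod 2) := Units.map (christoffelHom (ZMod 2) n h)
  have hφ : Function.Injective φ := Units.map_injective (christoffelHom_injective h)
  refine ⟨φ.range, fun A => ?_, ⟨(MonoidHom.ofInjective hφ).symm⟩⟩
  simp only [MonoidHom.mem_range, isChristoffel_iff_exists_units hn h, Units.ext_iff, φ,
    Units.coe_map]

lemma exists_isComplement'_zpowers_christoffelHom_eq (k : ℕ) (h : 2 ^ (k + 3) * 2 = 2 ^ (k + 4)) :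
    ∃ x y : (ZMod (2 ^ (k + 4)))ˣ,
      orderOf x = 2 ^ (k + 2) ∧ orderOf y = 2 ∧
      Subgroup.IsComplement' (Subgroup.zpowers x) (Subgroup.zpowers y) ∧
      christoffelHom (ZMod 2) (2 ^ (k + 3)) h x = christoffel (2 ^ (k + 3)) 3 1 0 ∧
      christoffelHom (ZMod 2) (2 ^ (k + 3)) h y =
        christoffel (2 ^ (k + 3)) (2 ^ (k + 3) - 1) 1 0 := by
  let x := ZMod.unitOfCoprime 3 (Nat.Coprime.pow_right (k + 4) (by decide : Nat.Coprime 3 2))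
  let y := Units.ofPowEqOne _ 2 (two_pow_sub_one_sq (k + 2)) two_ne_zero
  have hy : (y : ZMod (2 ^ (k + 4))) = (2 ^ (k + 3) - 1 : ℕ) := by
    simp [y, Nat.cast_sub Nat.one_le_two_pow]
  obtain ⟨hy_order, h_compl⟩ := orderOf_and_isComplement'_zpowers_three (x := x) (y := y) rfl rfl
  have h_three_lt : 3 < 2 ^ (k + 3) :=
    (by decide : 3 < 2 ^ 3).trans_le (Nat.pow_le_pow_right two_pos (Nat.le_add_left 3 k))
  refine ⟨x, y, ?_, hy_order, h_compl, ?_, ?_⟩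
  · rw [← orderOf_units]
    exact orderOf_three_zmod_two_pow (k + 1)
  · exact christoffelHom_natCast_of_lt h h_three_lt
  · rw [hy, christoffelHom_natCast_of_lt h (by lia)]

theorem christoffel_group_two_pow (k : ℕ) (hk : 1 ≤ k) :
    (∃ G : Subgroup (GL (Fin (2 ^ k)) (ZMod 2)),
      (∀ A : GL (Fin (2 ^ k)) (ZMod 2),
        A ∈ G ↔ IsChristoffel (2 ^ k) ((A : GL (Fin (2 ^ k)) (ZMod 2)) :
          Matrix (Fin (2 ^ k)) (Fin (2 ^ k)) (ZMod 2))) ∧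
      Nonempty (G ≃* Multiplicative (ZMod 2 × ZMod (2 ^ (k - 1))))) ∧
    (3 ≤ k →
      orderOf (christoffel (2 ^ k) 3 (1 : ZMod 2) 0) = 2 ^ (k - 1) ∧
      orderOf (christoffel (2 ^ k) (2 ^ k - 1) (1 : ZMod 2) 0) = 2 ∧
      (∀ j : ℕ, christoffel (2 ^ k) (2 ^ k - 1) (1 : ZMod 2) 0 ≠
        (christoffel (2 ^ k) 3 (1 : ZMod 2) 0) ^ j) ∧
      (∀ B : Matrix (Fin (2 ^ k)) (Fin (2 ^ k)) (ZMod 2),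
        IsChristoffel (2 ^ k) B → IsUnit B.det →
        ∃ i j : ℕ, B = (christoffel (2 ^ k) 3 (1 : ZMod 2) 0) ^ i *
          (christoffel (2 ^ k) (2 ^ k - 1) (1 : ZMod 2) 0) ^ j)) := by
  refine ⟨?_, fun hk3 => ?_⟩
  · obtain ⟨k, rfl⟩ := Nat.exists_eq_add_of_le' hk
    have h_even : Even (2 ^ (k + 1)) := even_two.pow_of_ne_zero k.succ_ne_zero
    obtain ⟨G, hG, ⟨e⟩⟩ := exists_subgroup_isChristoffel h_even (pow_succ 2 (k + 1)).symm
    obtain ⟨e'⟩ := nonempty_units_zmod_two_pow_mulEquiv k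
    exact ⟨G, hG, ⟨e.trans e'⟩⟩
  · obtain ⟨k, rfl⟩ := Nat.exists_eq_add_of_le' hk3
    have h := (pow_succ 2 (k + 3)).symm
    obtain ⟨x, y, hx, hy, h_compl, hφx, hφy⟩ := exists_isComplement'_zpowers_christoffelHom_eq k h
    let φ := (christoffelHom (ZMod 2) (2 ^ (k + 3)) h).comp (Units.coeHom _)
    have hφ : Function.Injective φ := (christoffelHom_injective h).comp Units.val_injective
    rw [← hφx, ← hφy]
    refine ⟨(orderOf_injective φ hφ x).trans hx, (orderOf_injective φ hφ y).trans hy, ?_, ?_⟩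
    · intro j hj
      have hyx : y = x ^ j := hφ (hj.trans (map_pow φ x j).symm)
      have hy_one : y = 1 := Subgroup.disjoint_def.mp h_compl.disjoint
        (hyx ▸ Subgroup.npow_mem_zpowers x j) (Subgroup.mem_zpowers y)
      simp [hy_one] at hy
    · intro B hB _
      obtain ⟨u, rfl⟩ := (isChristoffel_iff_exists_units (by simp [Nat.even_pow]) h).mp hB
      obtain ⟨i, j, rfl⟩ := exists_pow_mul_pow_eq_of_isComplement'_zpowers h_compl u
      exact ⟨i, j, by simp⟩
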